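/- arXiv:1311.2011 — 9 statements merged into one kernel-verified Lean document; each statement's English description precedes it below -/
import Mathlib

section
/- Let X be a Tychonoff topological space. If C_k(X) is productively countably tight, then X is productively Lindelöf. -/
open Set Topology

universe u

/-- A bornology on `X`: a collection of subsets covering `X`, closed under
taking subsets and under finite unions. -/
structure IsBornology {X : Type*} (𝔅 : Set (Set X)) : Prop where
  covers : ⋃₀ 𝔅 = Set.univ
  empty_mem : ∅ ∈ 𝔅
  subset_mem : ∀ ⦃A B : Set X⦄, B ∈ 𝔅 → A ⊆ B → A ∈ 𝔅
  union_mem : ∀ ⦃A B : Set X⦄, A ∈ 𝔅 → B ∈ 𝔅 → A ∪ B ∈ 𝔅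

/-- `𝔅` has a compact base: every member of `𝔅` is contained in a compact member of `𝔅`. -/
def HasCompactBase {X : Type*} [TopologicalSpace X] (𝔅 : Set (Set X)) : Prop :=
  ∀ B ∈ 𝔅, ∃ K ∈ 𝔅, IsCompact K ∧ B ⊆ K

/-- The set of continuous real-valued functions on `X` (as a bare type, to be
topologized by a bornology). -/
def CFn (X : Type u) [TopologicalSpace X] : Type u := {f : X → ℝ // Continuous f}

/-- The zero function as an element of `CFn X`. -/
def zeroFn (X : Type u) [TopologicalSpace X] : CFn X := ⟨fun _ => 0, continuous_const⟩

/-- The basic "ball" `⟨B, ε⟩[f] = {g : ∀ x ∈ B, |f x − g x| < ε}`. -/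
def unifBall {X : Type u} [TopologicalSpace X] (f : CFn X) (B : Set X) (ε : ℝ) :
    Set (CFn X) :=
  {g | ∀ x ∈ B, |f.1 x - g.1 x| < ε}

/-- The topology of uniform convergence on members of a bornology `𝔅`:
a set is open iff around each of its points it contains a basic ball
`⟨B, ε⟩[f]` with `B ∈ 𝔅`, `ε > 0`.  This makes `CFn X` into `C_𝔅(X)`. -/
def bornTopology {X : Type u} [TopologicalSpace X] (𝔅 : Set (Set X))
    (hB : IsBornology 𝔅) : TopologicalSpace (CFn X) where
  IsOpen U := ∀ f ∈ U, ∃ B ∈ 𝔅, ∃ ε > (0 : ℝ), unifBall f B ε ⊆ U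
  isOpen_univ := fun f _ => ⟨∅, hB.empty_mem, 1, one_pos, fun _ _ => trivial⟩
  isOpen_inter := by
    intro U V hU hV f hf
    obtain ⟨B₁, hB₁, ε₁, hε₁, h₁⟩ := hU f hf.1
    obtain ⟨B₂, hB₂, ε₂, hε₂, h₂⟩ := hV f hf.2
    refine ⟨B₁ ∪ B₂, hB.union_mem hB₁ hB₂, min ε₁ ε₂, lt_min hε₁ hε₂, fun g hg => ⟨?_, ?_⟩⟩
    · exact h₁ fun x hx => lt_of_lt_of_le (hg x (Or.inl hx)) (min_le_left _ _)
    · exact h₂ fun x hx => lt_of_lt_of_le (hg x (Or.inr hx)) (min_le_right _ _)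
  isOpen_sUnion := by
    intro S hS f hf
    obtain ⟨U, hU, hfU⟩ := hf
    obtain ⟨B, hB', ε, hε, h⟩ := hS U hU f hfU
    exact ⟨B, hB', ε, hε, h.trans (Set.subset_sUnion_of_mem hU)⟩

/-- `Ω_z`: the family of all subsets of `Z ∖ {z}` having `z` in their closure. -/
def OmegaAt {Z : Type*} [TopologicalSpace Z] (z : Z) : Set (Set Z) :=
  {A | A ⊆ {z}ᶜ ∧ z ∈ closure A}

/-- `𝒢` is a `𝔅`-cover of `X`: every member of `𝔅` is contained in a member of `𝒢`. -/
def IsBCover {X : Type*} (𝔅 : Set (Set X)) (𝒢 : Set (Set X)) : Prop :=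
  ∀ B ∈ 𝔅, ∃ G ∈ 𝒢, B ⊆ G

/-- `𝒪_𝔅`: the family of all open `𝔅`-covers of `X`. -/
def OpenBCovers {X : Type*} [TopologicalSpace X] (𝔅 : Set (Set X)) : Set (Set (Set X)) :=
  {𝒰 | (∀ U ∈ 𝒰, IsOpen U) ∧ IsBCover 𝔅 𝒰}

/-- `𝒢` is a K-cover of `X`: every compact subset of `X` is contained in a member of `𝒢`. -/
def IsKCover {X : Type*} [TopologicalSpace X] (𝒢 : Set (Set X)) : Prop :=
  ∀ K : Set X, IsCompact K → ∃ G ∈ 𝒢, K ⊆ G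

/-- `𝒦`: the family of all open K-covers of `X`. -/
def KCovers (X : Type*) [TopologicalSpace X] : Set (Set (Set X)) :=
  {𝒰 | (∀ U ∈ 𝒰, IsOpen U) ∧ IsKCover 𝒰}

/-- Player II has a winning strategy in the game `G₁(𝒜, 𝒞)` (of length `ω`):
a function assigning to each finite sequence `(A₀, …, Aₙ)` of moves of player I an
element of `Aₙ`, such that in any play following it the chosen points form a member of `𝒞`. -/
def G1WinII {T : Type*} (𝒜 𝒞 : Set (Set T)) : Prop :=
  ∃ σ : (n : ℕ) → (Fin (n + 1) → Set T) → T,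
    (∀ (n : ℕ) (h : Fin (n + 1) → Set T), (∀ i, h i ∈ 𝒜) → σ n h ∈ h (Fin.last n)) ∧
    ∀ A : ℕ → Set T, (∀ n, A n ∈ 𝒜) →
      (Set.range fun n => σ n fun i => A i.1) ∈ 𝒞

/-- Player II has a winning strategy in the transfinite game `G₁^α(𝒜, 𝒞)` of length `α`. -/
def G1WinIIOrd {T : Type*} (α : Ordinal.{0}) (𝒜 𝒞 : Set (Set T)) : Prop :=
  ∃ σ : (γ : {γ : Ordinal.{0} // γ < α}) → ({δ : Ordinal.{0} // δ ≤ γ.1} → Set T) → T,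
    (∀ (γ : {γ : Ordinal.{0} // γ < α}) (h : {δ : Ordinal.{0} // δ ≤ γ.1} → Set T),
      (∀ δ, h δ ∈ 𝒜) → σ γ h ∈ h ⟨γ.1, le_rfl⟩) ∧
    ∀ A : {γ : Ordinal.{0} // γ < α} → Set T, (∀ γ, A γ ∈ 𝒜) →
      (Set.range fun γ : {γ : Ordinal.{0} // γ < α} =>
        σ γ fun δ => A ⟨δ.1, lt_of_le_of_lt δ.2 γ.2⟩) ∈ 𝒞

/-- The selection principle `S₁(𝒜, 𝒞)`. -/
def S1 {T : Type*} (𝒜 𝒞 : Set (Set T)) : Prop :=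
  ∀ A : ℕ → Set T, (∀ n, A n ∈ 𝒜) →
    ∃ a : ℕ → T, (∀ n, a n ∈ A n) ∧ Set.range a ∈ 𝒞

/-- `Z` has countable tightness. -/
def CountablyTight (Z : Type*) [TopologicalSpace Z] : Prop :=
  ∀ (z : Z) (A : Set Z), z ∈ closure A → ∃ B ⊆ A, B.Countable ∧ z ∈ closure B

/-- `Z` is productively countably tight: `Z × Y` has countable tightness
for every countably tight space `Y`. -/
def ProductivelyCountablyTight (Z : Type u) [TopologicalSpace Z] : Prop :=
  ∀ (Y : Type u) [TopologicalSpace Y], CountablyTight Y → CountablyTight (Z × Y)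

/-- `Z` has tightness at most `κ`. -/
def TightnessLE (Z : Type u) [TopologicalSpace Z] (κ : Cardinal.{u}) : Prop :=
  ∀ (z : Z) (A : Set Z), z ∈ closure A → ∃ B ⊆ A, Cardinal.mk B ≤ κ ∧ z ∈ closure B

/-- `κ ∈ Sp(Z)`: for every space `Y` of tightness at most `κ`, the product `Z × Y`
has tightness at most `κ`. -/
def MemSp (Z : Type u) [TopologicalSpace Z] (κ : Cardinal.{u}) : Prop :=
  ∀ (Y : Type u) [TopologicalSpace Y], TightnessLE Y κ → TightnessLE (Z × Y) κ

/-- `G` is a `G_κ`-set: an intersection of at most `κ` open sets. -/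
def IsGKappaSet {X : Type u} [TopologicalSpace X] (κ : Cardinal.{u}) (G : Set X) : Prop :=
  ∃ 𝒪 : Set (Set X), (∀ O ∈ 𝒪, IsOpen O) ∧ Cardinal.mk 𝒪 ≤ κ ∧ G = ⋂₀ 𝒪

/-- `G` is a `G_δ`-set: an intersection of countably many open sets. -/
def IsGDeltaSet {X : Type*} [TopologicalSpace X] (G : Set X) : Prop :=
  ∃ 𝒪 : Set (Set X), (∀ O ∈ 𝒪, IsOpen O) ∧ 𝒪.Countable ∧ G = ⋂₀ 𝒪

/-- A family `ℙ` of collections of subsets of `Z` is `κ`-singular at `z`. -/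
def KappaSingularAt {Z : Type u} [TopologicalSpace Z] (κ : Cardinal.{u})
    (ℙ : Set (Set (Set Z))) (z : Z) : Prop :=
  (∀ ξ ∈ ℙ, ∀ A ∈ ξ, Cardinal.mk A ≤ κ) ∧
  (∀ ξ ∈ ℙ, ∀ F : Finset (Set Z), ↑F ⊆ ξ → (⋂₀ (F : Set (Set Z))).Nonempty) ∧
  (∀ O : Set Z, IsOpen O → z ∈ O → ∃ ξ ∈ ℙ, ∃ A ∈ ξ, A ⊆ O) ∧
  (∀ ℰ ⊆ ℙ, Cardinal.mk ℰ ≤ κ → ∃ c : Set (Set Z) → Set Z,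
    (∀ ξ ∈ ℰ, c ξ ∈ ξ) ∧ z ∉ closure (⋃ ξ ∈ ℰ, c ξ))

/-- `X` is an Alster space. -/
def Alster (X : Type*) [TopologicalSpace X] : Prop :=
  ∀ 𝒢 : Set (Set X), (∀ G ∈ 𝒢, IsGDeltaSet G) → IsKCover 𝒢 →
    ∃ 𝒢' ⊆ 𝒢, 𝒢'.Countable ∧ ⋃₀ 𝒢' = Set.univ

/-- `X` is strongly Alster. -/
def StronglyAlster (X : Type*) [TopologicalSpace X] : Prop :=
  ∀ 𝒢 : Set (Set X), (∀ G ∈ 𝒢, IsGDeltaSet G) → IsKCover 𝒢 →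
    ∃ 𝒢' ⊆ 𝒢, 𝒢'.Countable ∧ IsKCover 𝒢'

/-- `X` is productively Lindelöf. -/
def ProductivelyLindelof (X : Type u) [TopologicalSpace X] : Prop :=
  ∀ (Y : Type u) [TopologicalSpace Y], LindelofSpace Y → LindelofSpace (X × Y)

/-- `X` is hemicompact. -/
def Hemicompact (X : Type*) [TopologicalSpace X] : Prop :=
  ∃ K : ℕ → Set X, (∀ n, IsCompact (K n)) ∧ ∀ C : Set X, IsCompact C → ∃ n, C ⊆ K n

/-- The sequential fan with spines indexed by `ι`. -/
def fanTopology (ι : Type u) : TopologicalSpace (Option (ι × ℕ)) where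
  IsOpen S := none ∈ S → ∀ i, ∃ m, ∀ n, m ≤ n → some (i, n) ∈ S
  isOpen_univ := fun _ _ => ⟨0, fun _ _ => trivial⟩
  isOpen_inter := by
    intro S T hS hT h i
    obtain ⟨a, ha⟩ := hS h.1 i
    obtain ⟨b, hb⟩ := hT h.2 i
    exact ⟨max a b, fun n hn => ⟨ha n (le_trans (le_max_left _ _) hn),
      hb n (le_trans (le_max_right _ _) hn)⟩⟩
  isOpen_sUnion := by
    rintro 𝒮 h ⟨S, hS, hn⟩ i
    obtain ⟨a, ha⟩ := h S hS hn i
    exact ⟨a, fun n hn => ⟨S, hS, ha n hn⟩⟩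

theorem fan_countablyTight (ι : Type u) :
    @CountablyTight (Option (ι × ℕ)) (fanTopology ι) := by
  letI := fanTopology ι
  intro z A hz
  by_cases hzA : z ∈ A
  · exact ⟨{z}, by simpa using hzA, countable_singleton z, subset_closure rfl⟩
  cases z with
  | some p =>
    exfalso
    have ho : IsOpen ({some p} : Set (Option (ι × ℕ))) := fun h => by simp at h
    obtain ⟨q, hq, hqA⟩ := mem_closure_iff.1 hz _ ho rfl
    rw [mem_singleton_iff] at hq
    exact hzA (hq ▸ hqA)
  | none =>
    have : ∃ i, ∀ m, ∃ n, m ≤ n ∧ some (i, n) ∈ A := by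
      by_contra hc
      push Not at hc
      have ho : IsOpen (Aᶜ : Set (Option (ι × ℕ))) := fun _ i => hc i
      obtain ⟨q, hq, hqA⟩ := mem_closure_iff.1 hz _ ho hzA
      exact hq hqA
    obtain ⟨i, hi⟩ := this
    refine ⟨A ∩ range fun n : ℕ => some (i, n), inter_subset_left,
      (countable_range _).mono inter_subset_right, ?_⟩
    rw [mem_closure_iff]
    intro O hO hnO
    obtain ⟨m, hm⟩ := hO hnO i
    obtain ⟨n, hn, hnA⟩ := hi m
    exact ⟨_, hm n hn, hnA, n, rfl⟩

theorem exists_sep {X : Type u} [TopologicalSpace X] [T35Space X] {K U : Set X}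
    (hK : IsCompact K) (hU : IsOpen U) (hKU : K ⊆ U) :
    ∃ f : C(X, ℝ), (∀ x ∈ K, f x = 0) ∧ ∀ x ∉ U, f x = 1 := by
  obtain ⟨V, hV, rfl⟩ := (isInducing_stoneCechUnit (X := X)).isOpen_iff.1 hU
  have hc : IsClosed (stoneCechUnit '' K) := (hK.image continuous_stoneCechUnit).isClosed
  obtain ⟨f, h0, h1, -⟩ := exists_continuous_zero_one_of_isClosed hc hV.isClosed_compl (by
    rw [disjoint_compl_right_iff_subset]
    rintro _ ⟨x, hx, rfl⟩
    exact hKU hx)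
  refine ⟨f.comp ⟨stoneCechUnit, continuous_stoneCechUnit⟩, fun x hx => ?_, fun x hx => ?_⟩
  · exact h0 ⟨x, hx, rfl⟩
  · exact h1 hx

theorem exists_compact_of_nhds {X : Type u} [TopologicalSpace X] {O : Set C(X, ℝ)}
    (hO : O ∈ 𝓝 (0 : C(X, ℝ))) :
    ∃ K : Set X, IsCompact K ∧ ∀ f : C(X, ℝ), (∀ x ∈ K, f x = 0) → f ∈ O := by
  have hb := nhds_basis_uniformity'
    (ContinuousMap.hasBasis_compactConvergenceUniformity (α := X) (β := ℝ)) (x := 0)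
  obtain ⟨⟨K, V⟩, ⟨hK, hV⟩, hs⟩ := hb.mem_iff.1 hO
  refine ⟨K, hK, fun f hf => hs ?_⟩
  intro x hx
  simpa [hf x hx] using refl_mem_uniformity hV

theorem key {X : Type u} [TopologicalSpace X] [T35Space X]
    (h : ProductivelyCountablyTight C(X, ℝ))
    (U : {K : Set X // IsCompact K} → ℕ → Set X) (hU : ∀ K n, IsOpen (U K n))
    (hKU : ∀ K n, K.1 ⊆ U K n) :
    ∃ E : Set {K : Set X // IsCompact K}, E.Countable ∧ ∀ x, ∃ K ∈ E, ∀ n, x ∈ U K n := by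
  have hf : ∀ p : {K : Set X // IsCompact K} × ℕ, ∃ f : C(X, ℝ), (∀ x ∈ p.1.1, f x = 0) ∧
      ∀ x ∉ ⋂ m ∈ Iic p.2, U p.1 m, f x = 1 := by
    rintro ⟨K, n⟩
    exact exists_sep K.2 ((finite_Iic n).isOpen_biInter fun m _ => hU K m)
      (subset_iInter₂ fun m _ => hKU K m)
  choose f hf0 hf1 using hf
  letI := fanTopology {K : Set X // IsCompact K}
  have ht := h _ (fan_countablyTight {K : Set X // IsCompact K})
  obtain ⟨B, hB, hBc, hBcl⟩ := ht (0, none) (range fun p => (f p, some p)) (by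
    rw [mem_closure_iff_nhds]
    intro W hW
    obtain ⟨O, hO, N, hN, hON⟩ := mem_nhds_prod_iff.1 hW
    obtain ⟨K, hK, hKO⟩ := exists_compact_of_nhds hO
    obtain ⟨N', hN', hNo, hnN⟩ := mem_nhds_iff.1 hN
    obtain ⟨m, hm⟩ := hNo hnN ⟨K, hK⟩
    exact ⟨_, hON ⟨hKO _ (hf0 (⟨K, hK⟩, m)), hN' (hm m le_rfl)⟩, _, rfl⟩)
  have hEc : {K | ∃ n, (f (K, n), some (K, n)) ∈ B}.Countable := by
    have h1 : ((fun p : {K : Set X // IsCompact K} × ℕ => (f p, some p)) ⁻¹' B).Countable := by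
      refine hBc.preimage_of_injOn ?_
      intro p _ q _ hpq
      exact Option.some.inj (congrArg Prod.snd hpq)
    refine (h1.image Prod.fst).mono ?_
    rintro K ⟨n, hn⟩
    exact ⟨(K, n), hn, rfl⟩
  refine ⟨_, hEc, ?_⟩
  by_contra hc
  push Not at hc
  obtain ⟨x, hx⟩ := hc
  have hx' : ∀ K, ∃ m, K ∈ {K | ∃ n, (f (K, n), some (K, n)) ∈ B} → x ∉ U K m := by
    intro K
    by_cases hK : K ∈ {K | ∃ n, (f (K, n), some (K, n)) ∈ B}
    · obtain ⟨m, hm⟩ := hx K hK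
      exact ⟨m, fun _ => hm⟩
    · exact ⟨0, fun h => absurd h hK⟩
  choose c hc using hx'
  have hNo : IsOpen {q : Option ({K : Set X // IsCompact K} × ℕ) |
      ∀ K n, q = some (K, n) → c K ≤ n} := by
    intro _ K
    refine ⟨c K, fun n hn K' n' he => ?_⟩
    cases he
    exact hn
  have hOo : IsOpen {g : C(X, ℝ) | g x < 1} :=
    isOpen_Iio.preimage (continuous_eval_const (F := C(X, ℝ)) x)
  obtain ⟨⟨g, q⟩, ⟨hg, hq⟩, hgB⟩ := mem_closure_iff.1 hBcl _ (hOo.prod hNo) ⟨by simp, by simp⟩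
  obtain ⟨⟨K, n⟩, hp⟩ := hB hgB
  obtain ⟨rfl, rfl⟩ := Prod.mk.inj hp
  have hcn : c K ≤ n := hq K n rfl
  have h1 : f (K, n) x = 1 := hf1 (K, n) x fun hmem =>
    hc K ⟨n, hgB⟩ (mem_iInter₂.1 hmem (c K) hcn)
  have h2 : f (K, n) x < 1 := hg
  linarith

/-- If `C_k(X)` is productively countably tight, then `X` is productively
Lindelöf. -/
theorem stmt10 {X : Type u} [TopologicalSpace X] [T35Space X]
    (h : ProductivelyCountablyTight C(X, ℝ)) :
    ProductivelyLindelof X := by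
  intro Y _ hY
  refine ⟨isLindelof_of_countable_subcover ?_⟩
  intro ι W hWo hW
  -- every compact `K` has a `G_δ` neighbourhood whose product with `Y` is countably covered
  have hG : ∀ K : {K : Set X // IsCompact K}, ∃ (U : ℕ → Set X) (t : Set ι),
      (∀ n, IsOpen (U n)) ∧ (∀ n, K.1 ⊆ U n) ∧ t.Countable ∧
      ∀ x, (∀ n, x ∈ U n) → ∀ y : Y, ∃ i ∈ t, (x, y) ∈ W i := by
    rintro ⟨K, hK⟩
    have h1 : ∀ y : Y, ∃ (U : Set X) (V : Set Y) (t : Finset ι), IsOpen U ∧ IsOpen V ∧ K ⊆ U ∧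
        y ∈ V ∧ U ×ˢ V ⊆ ⋃ i ∈ t, W i := by
      intro y
      obtain ⟨t, ht⟩ := (hK.prod (isCompact_singleton (x := y))).elim_finite_subcover W hWo
        ((subset_univ _).trans hW)
      obtain ⟨U, V, hU, hV, hKU, hyV, hs⟩ := generalized_tube_lemma hK
        (isCompact_singleton (x := y)) (isOpen_biUnion fun i _ => hWo i) ht
      exact ⟨U, V, t, hU, hV, hKU, hyV rfl, hs⟩
    choose U V t hU hV hKU hyV hs using h1
    obtain ⟨r, hr, hrc⟩ := hY.isLindelof_univ.elim_countable_subcover V hV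
      fun y _ => mem_iUnion.2 ⟨y, hyV y⟩
    rcases r.eq_empty_or_nonempty with rfl | hne
    · refine ⟨fun _ => univ, ∅, fun _ => isOpen_univ, fun _ => subset_univ _, countable_empty, ?_⟩
      intro x _ y
      simpa using hrc (mem_univ y)
    · obtain ⟨e, rfl⟩ := hr.exists_eq_range hne
      refine ⟨fun n => U (e n), ⋃ n, (t (e n) : Set ι), fun n => hU _, fun n => hKU _,
        countable_iUnion fun n => (t (e n)).countable_toSet, ?_⟩
      intro x hx y
      obtain ⟨y', ⟨n, rfl⟩, hy⟩ := mem_iUnion₂.1 (hrc (mem_univ y))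
      obtain ⟨i, hi, hxy⟩ := mem_iUnion₂.1 (hs (e n) (mk_mem_prod (hx n) hy))
      exact ⟨i, mem_iUnion.2 ⟨n, hi⟩, hxy⟩
  choose U t hUo hKU htc hcov using hG
  obtain ⟨E, hE, hEx⟩ := key h U hUo hKU
  refine ⟨⋃ K ∈ E, t K, hE.biUnion fun K _ => htc K, ?_⟩
  rintro ⟨x, y⟩ _
  obtain ⟨K, hK, hx⟩ := hEx x
  obtain ⟨i, hi, hxy⟩ := hcov K x hx y
  exact mem_iUnion₂.2 ⟨i, mem_iUnion₂.2 ⟨K, hK, hi⟩, hxy⟩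
end

section
/- Let X be a Tychonoff topological space. If player II has a winning strategy in the game G₁(𝒦, 𝒦) played on X, then X is strongly Alster. -/
open Set Topology

universe u

/-- Key step: from any position there is a member of the `G_δ` K-cover which is the intersection
of countably many of player II's possible answers. -/
theorem stmt11_step {X : Type*} [TopologicalSpace X]
    (σ : (n : ℕ) → (Fin (n + 1) → Set (Set X)) → Set X)
    (hσ : ∀ (n : ℕ) (h : Fin (n + 1) → Set (Set X)), (∀ i, h i ∈ KCovers X) →
      σ n h ∈ h (Fin.last n))
    (𝒢 : Set (Set X)) (hG : ∀ G ∈ 𝒢, IsGDeltaSet G) (hK : IsKCover 𝒢)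
    (f : ℕ → KCovers X) (n : ℕ) :
    ∃ G ∈ 𝒢, ∃ A : ℕ → KCovers X,
      G = ⋂ k, σ n (fun i => (Function.update f n (A k) i.1 : KCovers X).1) := by
  have key : ∃ K : Set X, IsCompact K ∧ ∀ U, IsOpen U → K ⊆ U →
      ∃ A : KCovers X, σ n (fun i => (Function.update f n A i.1 : KCovers X).1) = U := by
    by_contra hcon
    push Not at hcon
    choose U hUo hKU hU using hcon
    let 𝒰 : KCovers X := ⟨{V | ∃ K, ∃ h : IsCompact K, V = U K h}, by
      constructor
      · rintro V ⟨K, h, rfl⟩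
        exact hUo K h
      · intro K h
        exact ⟨U K h, ⟨K, h, rfl⟩, hKU K h⟩⟩
    have h1 := hσ n (fun i => (Function.update f n 𝒰 i.1 : KCovers X).1)
      (fun i => (Function.update f n 𝒰 i.1 : KCovers X).2)
    have h2 : σ n (fun i => (Function.update f n 𝒰 i.1 : KCovers X).1) ∈ 𝒰.1 := by
      simpa using h1
    obtain ⟨K, h, hE⟩ := h2
    exact hU K h 𝒰 hE
  obtain ⟨K, hKc, hKU⟩ := key
  obtain ⟨G, hGm, hKG⟩ := hK K hKc
  obtain ⟨𝒪, hO, hOc, rfl⟩ := hG G hGm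
  obtain ⟨e, he⟩ := (hOc.insert univ).exists_eq_range (insert_nonempty _ _)
  have hee : ∀ k, IsOpen (e k) ∧ K ⊆ e k := by
    intro k
    have : e k ∈ insert univ 𝒪 := he ▸ mem_range_self k
    rcases this with h | h
    · rw [h]
      exact ⟨isOpen_univ, subset_univ _⟩
    · exact ⟨hO _ h, hKG.trans (sInter_subset_of_mem h)⟩
  choose A hA using fun k => hKU (e k) (hee k).1 (hee k).2
  refine ⟨_, hGm, A, ?_⟩
  simp only [hA]
  rw [← sInter_range, ← he, sInter_insert, univ_inter]

/-- Positions of the game indexed by (reversed) finite sequences of naturals. -/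
def stmt11Pos {S : Type*} (s : S) (A : (ℕ → S) → ℕ → ℕ → S) : List ℕ → ℕ → S
  | [] => fun _ => s
  | k :: l => Function.update (stmt11Pos s A l) l.length (A (stmt11Pos s A l) l.length k)

/-- If player II has a winning strategy in `G₁(𝒦, 𝒦)` on `X`, then `X` is
strongly Alster. -/
theorem stmt11 {X : Type*} [TopologicalSpace X] [T35Space X]
    (h : G1WinII (KCovers X) (KCovers X)) :
    StronglyAlster X := by
  obtain ⟨σ, hσ, hwin⟩ := h
  intro 𝒢 hG hK
  choose G hGm A hA using stmt11_step σ hσ 𝒢 hG hK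
  let s : KCovers X := ⟨{univ}, by
    constructor
    · rintro V rfl
      exact isOpen_univ
    · intro K _
      exact ⟨univ, rfl, subset_univ _⟩⟩
  let P := stmt11Pos s A
  refine ⟨range fun l : List ℕ => G (P l) l.length, ?_, countable_range _, ?_⟩
  · rintro _ ⟨l, rfl⟩
    exact hGm _ _
  intro C hC
  by_contra hcon
  have hex : ∀ l : List ℕ, ∃ k : ℕ,
      ¬ C ⊆ σ l.length (fun i => (P (k :: l) i.1).1) := by
    intro l
    by_contra! hl
    refine hcon ⟨_, ⟨l, rfl⟩, ?_⟩
    change C ⊆ G (P l) l.length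
    rw [hA]
    exact subset_iInter hl
  choose k hk using hex
  let L : ℕ → List ℕ := fun n => Nat.rec [] (fun _ l => k l :: l) n
  have hL : ∀ n, L (n + 1) = k (L n) :: L n := fun _ => rfl
  have hlen : ∀ n, (L n).length = n := by
    intro n
    induction n with
    | zero => rfl
    | succ n ih => rw [hL, List.length_cons, ih]
  have hP : ∀ m i, i < m → P (L m) i = P (L (i + 1)) i := by
    intro m
    induction m with
    | zero => intro i hi; omega
    | succ m ih =>
      intro i hi
      rcases Nat.lt_succ_iff_lt_or_eq.1 hi with h | rfl
      · rw [← ih i h, hL]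
        have hne : i ≠ (L m).length := by rw [hlen]; omega
        exact Function.update_of_ne hne _ _
      · rfl
  have hw := hwin (fun n => (P (L (n + 1)) n).1) (fun n => (P (L (n + 1)) n).2)
  obtain ⟨_, ⟨n, rfl⟩, hCn⟩ := hw.2 C hC
  have h1 := hk (L n)
  rw [← hL, hlen] at h1
  apply h1
  have : (fun i : Fin (n + 1) => (P (L (n + 1)) i.1).1) =
      fun i : Fin (n + 1) => (P (L (i.1 + 1)) i.1).1 := by
    funext i
    rw [hP (n + 1) i.1 i.2]
  rw [this]
  exact hCn
end

section
/- Let X be a Tychonoff topological space. If X is strongly Alster, then X satisfies the selection principle S₁(𝒦, 𝒦). -/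
open Set Topology

universe u

/-- If `X` is strongly Alster then `X` satisfies `S₁(𝒦, 𝒦)`. -/
theorem stmt12 {X : Type*} [TopologicalSpace X] [T35Space X]
    (h : StronglyAlster X) :
    S1 (KCovers X) (KCovers X) := by
  intro A hA
  choose U hU hKU using fun (K : {K : Set X // IsCompact K}) (n : ℕ) => (hA n).2 K.1 K.2
  obtain ⟨𝒢', hsub, hcount, hcov⟩ := h (Set.range fun K => ⋂ n, U K n)
    (by
      rintro _ ⟨K, rfl⟩
      refine ⟨Set.range (U K), ?_, Set.countable_range _, by simp [Set.sInter_range]⟩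
      rintro _ ⟨n, rfl⟩
      exact (hA n).1 _ (hU K n))
    (fun K hK => ⟨_, ⟨⟨K, hK⟩, rfl⟩, Set.subset_iInter fun n => hKU ⟨K, hK⟩ n⟩)
  have hne : 𝒢'.Nonempty := by
    obtain ⟨G, hG, _⟩ := hcov ∅ isCompact_empty
    exact ⟨G, hG⟩
  obtain ⟨f, rfl⟩ := hcount.exists_eq_range hne
  choose K hK using fun m => hsub (Set.mem_range_self (f := f) m)
  refine ⟨fun n => U (K n) n, fun n => hU _ _, ?_, ?_⟩
  · rintro _ ⟨n, rfl⟩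
    exact (hA n).1 _ (hU _ _)
  · intro C hC
    obtain ⟨_, ⟨m, rfl⟩, hm⟩ := hcov C hC
    refine ⟨_, ⟨m, rfl⟩, hm.trans ?_⟩
    rw [← hK m]
    exact Set.iInter_subset _ m
end

section
/- Let X be a Tychonoff topological space. If there exists a bornology 𝔅 with compact base on X such that C_𝔅(X) is productively countably tight, then X is an Alster space. -/
open Set Topology

universe u

/-- The sequential fan with spines indexed by `ι`. -/
def FanSp (ι : Type u) : Type u := Option (ι × ℕ)

instance fanTop (ι : Type u) : TopologicalSpace (FanSp ι) where
  IsOpen U := (none : Option (ι × ℕ)) ∈ U → ∀ k : ι, ∃ n : ℕ, ∀ m ≥ n, (some (k, m) : Option (ι × ℕ)) ∈ U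
  isOpen_univ := fun _ _ => ⟨0, fun _ _ => trivial⟩
  isOpen_inter := by
    intro U V hU hV h k
    obtain ⟨a, ha⟩ := hU h.1 k
    obtain ⟨b, hb⟩ := hV h.2 k
    exact ⟨max a b, fun m hm => ⟨ha m (le_trans (le_max_left _ _) hm),
      hb m (le_trans (le_max_right _ _) hm)⟩⟩
  isOpen_sUnion := by
    rintro S hS ⟨U, hU, hn⟩ k
    obtain ⟨a, ha⟩ := hS U hU hn k
    exact ⟨a, fun m hm => ⟨U, hU, ha m hm⟩⟩

theorem fanTop_isOpen_iff {ι : Type u} (U : Set (FanSp ι)) :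
    IsOpen U ↔ ((none : Option (ι × ℕ)) ∈ U →
      ∀ k : ι, ∃ n : ℕ, ∀ m ≥ n, (some (k, m) : Option (ι × ℕ)) ∈ U) := Iff.rfl

theorem fan_tight (ι : Type u) : CountablyTight (FanSp ι) := by
  intro z A hz
  by_cases hzA : z ∈ A
  · exact ⟨{z}, by simpa using hzA, countable_singleton z, subset_closure rfl⟩
  rcases z with _ | p
  · by_cases h : ∃ k : ι, ∀ n : ℕ, ∃ m ≥ n, (some (k, m) : Option (ι × ℕ)) ∈ A
    · obtain ⟨k, hk⟩ := h
      refine ⟨A ∩ Set.range (fun m : ℕ => (some (k, m) : Option (ι × ℕ))),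
        inter_subset_left, (countable_range _).mono inter_subset_right, ?_⟩
      refine mem_closure_iff.2 ?_
      intro U hU hnU
      obtain ⟨n, hn⟩ := (fanTop_isOpen_iff U).1 hU hnU k
      obtain ⟨m, hm, hmA⟩ := hk n
      exact ⟨_, hn m hm, hmA, ⟨m, rfl⟩⟩
    · exfalso
      push Not at h
      have ho : IsOpen (Aᶜ : Set (FanSp ι)) := by
        rw [fanTop_isOpen_iff]
        intro _ k
        exact h k
      obtain ⟨y, hy, hyA⟩ := mem_closure_iff.1 hz _ ho hzA
      exact hy hyA
  · exfalso
    have ho : IsOpen ({(some p : Option (ι × ℕ))} : Set (FanSp ι)) := by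
      rw [fanTop_isOpen_iff]
      intro h
      exact absurd h (by intro h; cases h)
    obtain ⟨y, hy, hyA⟩ := mem_closure_iff.1 hz _ ho rfl
    cases hy
    exact hzA hyA

theorem gdelta_seq {X : Type u} [TopologicalSpace X] {G : Set X} (hG : IsGDeltaSet G) :
    ∃ U : ℕ → Set X, (∀ n, IsOpen (U n)) ∧ Antitone U ∧ G = ⋂ n, U n := by
  obtain ⟨O, hO, hc, rfl⟩ := hG
  obtain ⟨V, hV⟩ := (hc.insert Set.univ).exists_eq_range (insert_nonempty _ _)
  have hVo : ∀ n, IsOpen (V n) := by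
    intro n
    have : V n ∈ insert Set.univ O := hV ▸ mem_range_self n
    rcases this with h | h
    · rw [h]; exact isOpen_univ
    · exact hO _ h
  refine ⟨fun n => ⋂ i ∈ Set.Iic n, V i, fun n => (Set.finite_Iic n).isOpen_biInter
    fun i _ => hVo i, ?_, ?_⟩
  · intro a b hab
    exact biInter_subset_biInter_left (Iic_subset_Iic.2 hab)
  · have : ⋂₀ O = ⋂ n, V n := by
      rw [← sInter_range, ← hV, sInter_insert, univ_inter]
    rw [this]
    ext x
    simp only [mem_iInter, mem_Iic]
    exact ⟨fun h _ i _ => h i, fun h i => h i i le_rfl⟩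

theorem urysohn_cpt {X : Type u} [TopologicalSpace X] [T35Space X] {K U : Set X}
    (hK : IsCompact K) (hU : IsOpen U) (h : K ⊆ U) :
    ∃ f : CFn X, (∀ x ∈ K, f.1 x = 0) ∧ ∀ x ∉ U, f.1 x = 1 := by
  obtain ⟨V, hV, hVU⟩ := (isInducing_stoneCechUnit (X := X)).isOpen_iff.1 hU
  obtain ⟨f, hf0, hf1, -⟩ := exists_continuous_zero_one_of_isClosed
    (hK.image (continuous_stoneCechUnit (α := X))).isClosed hV.isClosed_compl (by
      rw [Set.disjoint_compl_right_iff_subset]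
      rintro _ ⟨x, hx, rfl⟩
      have : x ∈ stoneCechUnit ⁻¹' V := hVU ▸ h hx
      exact this)
  refine ⟨⟨fun x => f (stoneCechUnit x), f.continuous.comp continuous_stoneCechUnit⟩,
    fun x hx => hf0 ⟨x, hx, rfl⟩, fun x hx => hf1 ?_⟩
  intro hxV
  apply hx
  rw [← hVU]
  exact hxV

/-- If there exists a bornology `𝔅` with compact base on `X` such that
`C_𝔅(X)` is productively countably tight, then `X` is an Alster space. -/
theorem stmt13 {X : Type u} [TopologicalSpace X] [T35Space X]
    (h : ∃ (𝔅 : Set (Set X)) (hB : IsBornology 𝔅), HasCompactBase 𝔅 ∧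
      @ProductivelyCountablyTight (CFn X) (bornTopology 𝔅 hB)) :
    Alster X := by
  obtain ⟨𝔅, hB, hcb, hp⟩ := h
  intro 𝒢 h𝒢 hK
  let := bornTopology 𝔅 hB
  let ι := {K : Set X // K ∈ 𝔅 ∧ IsCompact K}
  have h1 : ∀ k : ι, ∃ G ∈ 𝒢, k.1 ⊆ G := fun k => hK k.1 k.2.2
  choose G hG𝒢 hkG using h1
  have h2 := fun k : ι => gdelta_seq (h𝒢 _ (hG𝒢 k))
  choose U hUo hUa hUG using h2
  have h3 : ∀ (k : ι) (n : ℕ), ∃ f : CFn X, (∀ x ∈ k.1, f.1 x = 0) ∧ ∀ x ∉ U k n, f.1 x = 1 := by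
    intro k n
    refine urysohn_cpt k.2.2 (hUo k n) ((hkG k).trans ?_)
    rw [hUG k]
    exact iInter_subset _ n
  choose f hf0 hf1 using h3
  let d : ι × ℕ → CFn X × FanSp ι := fun p => (f p.1 p.2, (some p : Option (ι × ℕ)))
  have hcl : ((zeroFn X, (none : Option (ι × ℕ))) : CFn X × FanSp ι) ∈ closure (Set.range d) := by
    rw [mem_closure_iff]
    intro O hO hz
    obtain ⟨O₁, O₂, hO₁, hO₂, hz₁, hz₂, hsub⟩ := isOpen_prod_iff.1 hO _ _ hz
    obtain ⟨B, hBm, ε, hε, hball⟩ := hO₁ _ hz₁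
    obtain ⟨K, hK𝔅, hKc, hBK⟩ := hcb B hBm
    obtain ⟨n, hn⟩ := (fanTop_isOpen_iff O₂).1 hO₂ hz₂ ⟨K, hK𝔅, hKc⟩
    refine ⟨d (⟨K, hK𝔅, hKc⟩, n), hsub ⟨hball ?_, hn n le_rfl⟩, mem_range_self _⟩
    intro x hx
    have := hf0 ⟨K, hK𝔅, hKc⟩ n x (hBK hx)
    simpa [zeroFn, d, this] using hε
  obtain ⟨E, hED, hEc, hE⟩ := hp (FanSp ι) (fan_tight ι) _ _ hcl
  have hEc' : (d ⁻¹' E).Countable := by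
    refine hEc.preimage_of_injOn ?_
    intro p _ q _ hpq
    exact Option.some.inj (congrArg Prod.snd hpq)
  refine ⟨(fun p : ι × ℕ => G p.1) '' (d ⁻¹' E), ?_, hEc'.image _, ?_⟩
  · rintro _ ⟨p, _, rfl⟩
    exact hG𝒢 _
  by_contra hne
  obtain ⟨x, hx⟩ := (ne_univ_iff_exists_notMem _).1 hne
  have hx' : ∀ p ∈ d ⁻¹' E, x ∉ G p.1 := fun p hp hxG => hx ⟨_, ⟨p, hp, rfl⟩, hxG⟩
  have hxB : ({x} : Set X) ∈ 𝔅 := by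
    have : x ∈ ⋃₀ 𝔅 := by rw [hB.covers]; trivial
    obtain ⟨B, hBm, hxBm⟩ := this
    exact hB.subset_mem hBm (singleton_subset_iff.2 hxBm)
  have hO : IsOpen {g : CFn X | |g.1 x| < 1} := by
    intro g hg
    refine ⟨{x}, hxB, 1 - |g.1 x|, sub_pos.2 hg, ?_⟩
    intro g' hg'
    have h4 := hg' x rfl
    have h5 : |g'.1 x| - |g.1 x| ≤ |g'.1 x - g.1 x| := abs_sub_abs_le_abs_sub _ _
    rw [abs_sub_comm] at h5
    change |g'.1 x| < 1
    linarith
  let W : Set (FanSp ι) := {y | ∀ p : ι × ℕ, y = (some p : Option (ι × ℕ)) →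
    p ∈ d ⁻¹' E → x ∉ U p.1 p.2}
  have hW : IsOpen W := by
    rw [fanTop_isOpen_iff]
    intro _ k
    by_cases hk : ∃ m, (k, m) ∈ d ⁻¹' E
    · obtain ⟨m, hm⟩ := hk
      have h6 := hx' _ hm
      simp only [hUG k, mem_iInter, not_forall] at h6
      obtain ⟨n, hn⟩ := h6
      refine ⟨n, fun m hm p hp _ => ?_⟩
      cases Option.some.inj hp
      exact fun hxm => hn (hUa k hm hxm)
    · refine ⟨0, fun m _ p hp hpE => ?_⟩
      cases Option.some.inj hp
      exact absurd ⟨m, hpE⟩ hk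
  obtain ⟨y, ⟨hy1, hy2⟩, hyE⟩ := mem_closure_iff.1 hE _ (hO.prod hW)
    ⟨by change |(0 : ℝ)| < 1; simp, fun p hp => by cases hp⟩
  obtain ⟨p, rfl⟩ := hED hyE
  have h7 := hf1 p.1 p.2 x (hy2 p rfl hyE)
  have h8 : |(f p.1 p.2).1 x| < 1 := hy1
  rw [h7] at h8
  simp at h8
end

section
/- Let X be a Hausdorff topological space in which every compact subset is a G_δ-set. Then X is an Alster space if and only if X is σ-compact. -/
open Set Topology

universe u

/-- In a Hausdorff space in which every compact subset is a `G_δ`-set,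
Alster is equivalent to σ-compactness. -/
theorem stmt15 {X : Type*} [TopologicalSpace X] [T2Space X]
    (h : ∀ K : Set X, IsCompact K → IsGDeltaSet K) :
    Alster X ↔ ∃ K : ℕ → Set X, (∀ n, IsCompact (K n)) ∧ ⋃ n, K n = Set.univ := by
  constructor
  · intro hA
    obtain ⟨G, hG, hc, hu⟩ := hA {K | IsCompact K} (fun K hK => h K hK)
      (fun K hK => ⟨K, hK, subset_rfl⟩)
    obtain ⟨f, hf⟩ := (hc.insert ∅).exists_eq_range (insert_nonempty _ _)
    refine ⟨f, fun n => ?_, ?_⟩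
    · have hn : f n ∈ insert ∅ G := hf ▸ mem_range_self n
      rcases hn with hn | hn
      · rw [hn]
        exact isCompact_empty
      · exact hG hn
    · rw [← sUnion_range, ← hf, sUnion_insert, hu, union_univ]
  · rintro ⟨K, hK, hu⟩ G _ hcov
    choose g hg hKg using fun n => hcov (K n) (hK n)
    refine ⟨range g, range_subset_iff.2 hg, countable_range g, ?_⟩
    rw [sUnion_range, eq_univ_iff_forall]
    intro x
    have hx : x ∈ ⋃ n, K n := hu ▸ mem_univ x
    obtain ⟨n, hn⟩ := mem_iUnion.1 hx
    exact mem_iUnion.2 ⟨n, hKg n hn⟩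
end

section
/- Let X be a Hausdorff topological space in which every compact subset is a G_δ-set. Then X is strongly Alster if and only if X is hemicompact. -/
open Set Topology

universe u

/-- In a Hausdorff space in which every compact subset is a `G_δ`-set,
strongly Alster is equivalent to hemicompactness. -/
theorem stmt16 {X : Type*} [TopologicalSpace X] [T2Space X]
    (h : ∀ K : Set X, IsCompact K → IsGDeltaSet K) :
    StronglyAlster X ↔ Hemicompact X := by
  constructor
  · intro hS
    obtain ⟨𝒢, hsub, hc, hk⟩ := hS {K | IsCompact K} (fun K hK => h K hK)
      (fun K hK => ⟨K, hK, Subset.rfl⟩)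
    obtain ⟨G₀, hG₀, -⟩ := hk ∅ isCompact_empty
    obtain ⟨f, hf⟩ := hc.exists_eq_range ⟨G₀, hG₀⟩
    subst hf
    refine ⟨f, fun n => hsub ⟨n, rfl⟩, fun C hC => ?_⟩
    obtain ⟨_, ⟨n, rfl⟩, hn⟩ := hk C hC
    exact ⟨n, hn⟩
  · rintro ⟨K, hK, hcof⟩ 𝒢 - hcov
    choose G hG hKG using fun n => hcov (K n) (hK n)
    refine ⟨range G, ?_, countable_range G, fun C hC => ?_⟩
    · rintro _ ⟨n, rfl⟩
      exact hG n
    · obtain ⟨n, hn⟩ := hcof C hC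
      exact ⟨G n, ⟨n, rfl⟩, hn.trans (hKG n)⟩
end

section
/- The space C_k(ℚ) of continuous real-valued functions on the rational numbers (with the subspace topology inherited from ℝ) equipped with the compact-open topology is not productively countably tight. -/
open Set Topology

universe u

/-- The sequential fan with spines indexed by `ι`. -/
inductive SeqFan (ι : Type) : Type
  | apex : SeqFan ι
  | pt : ι × ℕ → SeqFan ι

instance (ι : Type) : TopologicalSpace (SeqFan ι) where
  IsOpen U := (SeqFan.apex : SeqFan ι) ∈ U →
    ∀ i : ι, ∃ N : ℕ, ∀ n ≥ N, (SeqFan.pt (i, n) : SeqFan ι) ∈ U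
  isOpen_univ := fun _ _ => ⟨0, fun _ _ => trivial⟩
  isOpen_inter := by
    intro U V hU hV h i
    obtain ⟨N, hN⟩ := hU h.1 i
    obtain ⟨M, hM⟩ := hV h.2 i
    exact ⟨max N M, fun n hn => ⟨hN n (le_trans (le_max_left _ _) hn),
      hM n (le_trans (le_max_right _ _) hn)⟩⟩
  isOpen_sUnion := by
    rintro S hS ⟨U, hU, h⟩ i
    obtain ⟨N, hN⟩ := hS U hU h i
    exact ⟨N, fun n hn => ⟨U, hU, hN n hn⟩⟩

theorem SeqFan.isOpen_iff {ι : Type} (U : Set (SeqFan ι)) : IsOpen U ↔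
    ((SeqFan.apex : SeqFan ι) ∈ U →
      ∀ i : ι, ∃ N : ℕ, ∀ n ≥ N, (SeqFan.pt (i, n) : SeqFan ι) ∈ U) := Iff.rfl

theorem SeqFan.countablyTight (ι : Type) : CountablyTight (SeqFan ι) := by
  intro z A hz
  by_cases hzA : z ∈ A
  · exact ⟨{z}, by simpa using hzA, countable_singleton z, subset_closure rfl⟩
  rcases z with _ | ⟨i, n⟩
  · by_cases hi : ∃ i : ι, ∀ N : ℕ, ∃ n ≥ N, (SeqFan.pt (i, n) : SeqFan ι) ∈ A
    · obtain ⟨i, hi⟩ := hi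
      refine ⟨A ∩ range (fun n : ℕ => (SeqFan.pt (i, n) : SeqFan ι)), inter_subset_left,
        (countable_range _).mono inter_subset_right, ?_⟩
      rw [mem_closure_iff]
      intro U hU h0
      obtain ⟨N, hN⟩ := (SeqFan.isOpen_iff U).1 hU h0 i
      obtain ⟨n, hn, hA⟩ := hi N
      exact ⟨_, hN n hn, hA, ⟨n, rfl⟩⟩
    · push Not at hi
      exfalso
      have hop : IsOpen (Aᶜ) := (SeqFan.isOpen_iff _).2 fun _ => hi
      obtain ⟨y, hy, hy'⟩ := mem_closure_iff.1 hz _ hop hzA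
      exact hy hy'
  · exfalso
    have hop : IsOpen (Aᶜ ∩ {SeqFan.apex}ᶜ : Set (SeqFan ι)) :=
      (SeqFan.isOpen_iff _).2 fun h => absurd rfl h.2
    obtain ⟨y, hy, hy'⟩ := mem_closure_iff.1 hz _ hop ⟨hzA, fun h => by cases h⟩
    exact hy.1 hy'

open TopologicalSpace in
/-- Rationals are not hemicompact, in the form of a convergent sequence escaping. -/
theorem rat_escape (e : ℕ → NonemptyCompacts ℚ) :
    ∃ C : Set ℚ, IsCompact C ∧ ∀ j, ∃ x ∈ C, x ∉ (e j : Set ℚ) := by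
  have h : ∀ j : ℕ, ∃ x : ℚ, dist x 0 < 1 / ((j : ℝ) + 1) ∧ x ∉ (e j : Set ℚ) := by
    intro j
    by_contra hcon
    push Not at hcon
    have h1 : (0 : ℚ) ∈ interior (e j : Set ℚ) :=
      mem_interior_iff_mem_nhds.2 (Metric.mem_nhds_iff.2
        ⟨1 / ((j : ℝ) + 1), by positivity, fun x hx => hcon x hx⟩)
    rw [Rat.interior_compact_eq_empty (e j).isCompact] at h1
    exact h1
  choose x hx hxe using h
  have ht : Filter.Tendsto x Filter.atTop (𝓝 0) := by
    rw [tendsto_iff_dist_tendsto_zero]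
    exact squeeze_zero (fun _ => dist_nonneg) (fun j => (hx j).le)
      tendsto_one_div_add_atTop_nhds_zero_nat
  exact ⟨_, ht.isCompact_insert_range, fun j => ⟨x j, Or.inr ⟨j, rfl⟩, hxe j⟩⟩

open TopologicalSpace in
/-- The function `n * dist(x, K)`. -/
noncomputable def fanFn (K : NonemptyCompacts ℚ) (n : ℕ) : C(ℚ, ℝ) :=
  ⟨fun x => n * Metric.infDist x (K : Set ℚ),
    continuous_const.mul (Metric.continuous_infDist_pt _)⟩

/-- `C_k(ℚ)` is not productively countably tight. -/
theorem stmt17 : ¬ ProductivelyCountablyTight C(ℚ, ℝ) := by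
  intro hP
  let ι := TopologicalSpace.NonemptyCompacts ℚ
  let p : ι × ℕ → C(ℚ, ℝ) × SeqFan ι := fun q => (fanFn q.1 q.2, SeqFan.pt q)
  have hcl : ((0 : C(ℚ, ℝ)), (SeqFan.apex : SeqFan ι)) ∈ closure (range p) := by
    rw [mem_closure_iff_nhds]
    intro W hW
    obtain ⟨V, hV, U, hU, hVU⟩ := mem_nhds_prod_iff.1 hW
    obtain ⟨E, hE, hEV⟩ := UniformSpace.mem_nhds_iff.1 hV
    obtain ⟨K, D, hK, hD, hKD⟩ := (ContinuousMap.mem_compactConvergence_entourage_iff E).1 hE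
    let K' : ι := ⟨⟨insert 0 K, hK.insert 0⟩, insert_nonempty _ _⟩
    obtain ⟨U', hU'U, hU'o, h0⟩ := mem_nhds_iff.1 hU
    obtain ⟨N, hN⟩ := (SeqFan.isOpen_iff U').1 hU'o h0 K'
    refine ⟨p (K', N), hVU ⟨hEV ?_, hU'U (hN N le_rfl)⟩, ⟨_, rfl⟩⟩
    apply hKD
    intro x hx
    have hx' : x ∈ (K' : Set ℚ) := Or.inr hx
    have : fanFn K' N x = 0 := by
      simp [fanFn, Metric.infDist_zero_of_mem hx']
    show ((0 : ℝ), fanFn K' N x) ∈ D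
    rw [this]
    exact refl_mem_uniformity hD
  obtain ⟨B, hBA, hBc, hB⟩ := hP (SeqFan ι) (SeqFan.countablyTight ι) _ _ hcl
  let J : Set ι := {K | ∃ n, p (K, n) ∈ B}
  have hpinj : Function.Injective p := fun a b h => SeqFan.pt.inj (Prod.ext_iff.1 h).2
  have hJ : J.Countable := by
    refine ((hBc.preimage hpinj).image Prod.fst).mono ?_
    rintro K ⟨n, hn⟩
    exact ⟨(K, n), hn, rfl⟩
  have : Nonempty ι := ⟨⟨⟨{0}, isCompact_singleton⟩, singleton_nonempty _⟩⟩
  obtain ⟨e, he⟩ := countable_iff_exists_subset_range.1 hJ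
  obtain ⟨C, hC, hCe⟩ := rat_escape e
  have hh : ∀ K : ι, ∃ N : ℕ, K ∈ J → ∀ n ≥ N, ∃ x ∈ C, 1 ≤ fanFn K n x := by
    intro K
    by_cases hKJ : K ∈ J
    · obtain ⟨j, rfl⟩ := he hKJ
      obtain ⟨x, hxC, hx⟩ := hCe j
      have hpos : 0 < Metric.infDist x (e j : Set ℚ) :=
        ((e j).isCompact.isClosed.notMem_iff_infDist_pos (e j).nonempty).1 hx
      obtain ⟨N, hN⟩ := exists_nat_ge (1 / Metric.infDist x (e j : Set ℚ))
      refine ⟨N, fun _ n hn => ⟨x, hxC, ?_⟩⟩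
      show 1 ≤ (n : ℝ) * Metric.infDist x (e j : Set ℚ)
      rw [div_le_iff₀ hpos] at hN
      refine hN.trans ?_
      gcongr
    · exact ⟨0, fun h => absurd h hKJ⟩
  choose h hh using hh
  let U : Set (SeqFan ι) := {y | ∀ K n, y = SeqFan.pt (K, n) → h K ≤ n}
  have hU : IsOpen U := (SeqFan.isOpen_iff U).2 fun _ K => ⟨h K, fun n hn K' n' heq => by
    cases heq
    exact hn⟩
  have h0U : (SeqFan.apex : SeqFan ι) ∈ U := fun K n heq => by cases heq
  have hV : {g : C(ℚ, ℝ) | MapsTo g C (Iio 1)} ∈ 𝓝 (0 : C(ℚ, ℝ)) :=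
    ContinuousMap.eventually_mapsTo hC isOpen_Iio (fun x _ => by simp)
  obtain ⟨y, ⟨hy1, hy2⟩, hyB⟩ :=
    mem_closure_iff_nhds.1 hB _ (prod_mem_nhds hV (hU.mem_nhds h0U))
  obtain ⟨⟨K, n⟩, rfl⟩ := hBA hyB
  obtain ⟨x, hxC, hx⟩ := hh K ⟨n, hyB⟩ n (hy2 K n rfl)
  exact absurd (hy1 hxC) (not_lt.2 hx)
end

section
/- The space of irrational numbers (ℝ ∖ ℚ with the subspace topology inherited from ℝ) is not an Alster space. -/
open Set Topology

universe u

/-- The space of irrational numbers is not an Alster space. -/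
theorem stmt18 : ¬ Alster {x : ℝ // Irrational x} := by
  intro h
  obtain ⟨𝒢, hsub, hc, hU⟩ := h {K | IsCompact K}
    (fun K hK => (IsCompact.isClosed hK).isGδ)
    (fun K hK => ⟨K, hK, subset_rfl⟩)
  -- the rationals would be a dense Gδ set
  have hQ : IsGδ (⋂ K ∈ 𝒢, ((Subtype.val '' K : Set ℝ))ᶜ) :=
    IsGδ.biInter hc fun K hK =>
      ((IsCompact.image (hsub hK) continuous_subtype_val).isClosed.isOpen_compl).isGδ
  have hQd : Dense (⋂ K ∈ 𝒢, ((Subtype.val '' K : Set ℝ))ᶜ) := by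
    refine Rat.isDenseEmbedding_coe_real.dense.mono ?_
    rintro _ ⟨q, rfl⟩
    simp only [mem_iInter]
    rintro K - ⟨x, -, hx⟩
    exact x.2 ⟨q, hx.symm⟩
  obtain ⟨x, hx1, hx2⟩ :=
    (hQd.inter_of_Gδ hQ IsGδ.setOf_irrational dense_irrational).nonempty
  have hx : (⟨x, hx2⟩ : {x : ℝ // Irrational x}) ∈ ⋃₀ 𝒢 := hU ▸ mem_univ _
  obtain ⟨K, hK, hxK⟩ := hx
  exact (mem_iInter₂.1 hx1 K hK) ⟨_, hxK, rfl⟩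
end

section
/- Let X be a Tychonoff topological space and let 𝔅 be a bornology with compact base on X. Then C_𝔅(X) satisfies the selection principle S₁(Ω_{0̄}, Ω_{0̄}) if and only if X satisfies the selection principle S₁(𝒪_𝔅, 𝒪_𝔅). -/
open Set Topology

universe u

theorem aux_sep {X : Type u} [TopologicalSpace X] [T35Space X] {K U : Set X}
    (hK : IsCompact K) (hU : IsOpen U) (hKU : K ⊆ U) :
    ∃ f : X → ℝ, Continuous f ∧ (∀ x ∈ K, f x = 0) ∧ ∀ x, x ∉ U → f x = 1 := by
  have key : ∃ f : X → ℝ, Continuous f ∧ (∀ x, 0 ≤ f x ∧ f x ≤ 1) ∧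
      (∀ x ∈ K, f x < 1 / 2) ∧ ∀ x, x ∉ U → f x = 1 := by
    refine hK.induction_on (p := fun s => ∃ f : X → ℝ, Continuous f ∧ (∀ x, 0 ≤ f x ∧ f x ≤ 1) ∧
      (∀ x ∈ s, f x < 1 / 2) ∧ ∀ x, x ∉ U → f x = 1) ?_ ?_ ?_ ?_
    · exact ⟨fun _ => 1, continuous_const, fun _ => ⟨zero_le_one, le_rfl⟩,
        fun x hx => hx.elim, fun _ _ => rfl⟩
    · rintro s t hst ⟨f, h1, h2, h3, h4⟩
      exact ⟨f, h1, h2, fun x hx => h3 x (hst hx), h4⟩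
    · rintro s t ⟨f, h1, h2, h3, h4⟩ ⟨g, k1, k2, k3, k4⟩
      refine ⟨fun x => f x * g x, h1.mul k1, fun x => ?_, fun x hx => ?_, fun x hx => ?_⟩
      · exact ⟨mul_nonneg (h2 x).1 (k2 x).1, mul_le_one₀ (h2 x).2 (k2 x).1 (k2 x).2⟩
      · rcases hx with hx | hx
        · exact lt_of_le_of_lt (mul_le_of_le_one_right (h2 x).1 (k2 x).2) (h3 x hx)
        · exact lt_of_le_of_lt (mul_le_of_le_one_left (k2 x).1 (h2 x).2) (k3 x hx)
      · simp [h4 x hx, k4 x hx]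
    · intro x hx
      obtain ⟨f, hf, hf0, hf1⟩ :=
        CompletelyRegularSpace.completely_regular_isOpen x U hU (hKU hx)
      have hc : Continuous fun y => (f y : ℝ) := continuous_subtype_val.comp hf
      refine ⟨{y | (f y : ℝ) < 1 / 2}, mem_nhdsWithin_of_mem_nhds
        ((isOpen_lt hc continuous_const).mem_nhds ?_), fun y => (f y : ℝ), hc,
        fun y => (f y).2, fun y hy => hy, fun y hy => ?_⟩
      · simp [hf0]
      · simp [hf1 hy]
  obtain ⟨f, h1, h2, h3, h4⟩ := key
  refine ⟨fun x => max 0 (2 * f x - 1), by fun_prop, fun x hx => ?_, fun x hx => ?_⟩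
  · have := h3 x hx
    exact max_eq_left (by linarith)
  · simp only [h4 x hx]
    norm_num

theorem aux_closure {X : Type u} [TopologicalSpace X] (𝔅 : Set (Set X)) (hB : IsBornology 𝔅)
    (A : Set (CFn X)) :
    zeroFn X ∈ @closure _ (bornTopology 𝔅 hB) A ↔
      ∀ B ∈ 𝔅, ∀ ε > (0 : ℝ), ∃ f ∈ A, ∀ x ∈ B, |f.1 x| < ε := by
  letI := bornTopology 𝔅 hB
  rw [mem_closure_iff]
  constructor
  · intro h B hBB ε hε
    obtain ⟨f, ⟨δ, hδ, hf⟩, hfA⟩ := h {g | ∃ δ < ε, ∀ x ∈ B, |g.1 x| ≤ δ} (by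
      rintro g ⟨δ, hδ, hg⟩
      refine ⟨B, hBB, (ε - δ) / 2, by linarith, fun k hk => ⟨δ + (ε - δ) / 2, by linarith, ?_⟩⟩
      intro x hx
      have h1 := hg x hx
      have h2 : |g.1 x - k.1 x| < (ε - δ) / 2 := hk x hx
      rw [abs_le] at h1 ⊢
      rw [abs_lt] at h2
      constructor <;> linarith) ⟨0, hε, fun x _ => by simp [zeroFn]⟩
    exact ⟨f, hfA, fun x hx => (hf x hx).trans_lt hδ⟩
  · intro h U hU hz
    obtain ⟨B, hBB, ε, hε, hs⟩ := hU _ hz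
    obtain ⟨f, hfA, hf⟩ := h B hBB ε hε
    exact ⟨f, hs fun x hx => by simpa [zeroFn] using hf x hx, hfA⟩

/-- `C_𝔅(X)` satisfies `S₁(Ω_{0̄}, Ω_{0̄})` iff `X` satisfies
`S₁(𝒪_𝔅, 𝒪_𝔅)`. -/
theorem stmt19 {X : Type u} [TopologicalSpace X] [T35Space X]
    (𝔅 : Set (Set X)) (hB : IsBornology 𝔅) (hcb : HasCompactBase 𝔅) :
    S1 (@OmegaAt (CFn X) (bornTopology 𝔅 hB) (zeroFn X))
        (@OmegaAt (CFn X) (bornTopology 𝔅 hB) (zeroFn X)) ↔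
      S1 (OpenBCovers 𝔅) (OpenBCovers 𝔅) := by
  constructor
  · intro h 𝒰 h𝒰
    have hne : ∀ n, ∃ U, U ∈ 𝒰 n := fun n =>
      let ⟨U, hU, _⟩ := (h𝒰 n).2 ∅ hB.empty_mem
      ⟨U, hU⟩
    by_cases huniv : ∃ n, Set.univ ∈ 𝒰 n
    · obtain ⟨n, hn⟩ := huniv
      choose V hV using hne
      have hmem : ∀ m, Function.update V n Set.univ m ∈ 𝒰 m := by
        intro m
        by_cases hm : m = n
        · subst hm
          simpa using hn
        · simpa [hm] using hV m
      refine ⟨Function.update V n Set.univ, hmem, ?_, ?_⟩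
      · rintro _ ⟨m, rfl⟩
        exact (h𝒰 m).1 _ (hmem m)
      · exact fun B _ => ⟨_, ⟨n, rfl⟩, by simp⟩
    · push Not at huniv
      obtain ⟨f, hf, hfΩ⟩ := h (fun n => {f | ∃ U ∈ 𝒰 n, ∀ x, x ∉ U → f.1 x = 1}) (by
        intro n
        refine ⟨?_, ?_⟩
        · rintro f ⟨U, hU, hfU⟩ hf0
          obtain ⟨x, hx⟩ : ∃ x, x ∉ U := by
            by_contra hcon
            push Not at hcon
            exact huniv n (Set.eq_univ_of_forall hcon ▸ hU)
          have h1 := hfU x hx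
          rw [Set.mem_singleton_iff.1 hf0] at h1
          simp [zeroFn] at h1
        · rw [aux_closure]
          intro B hBB ε hε
          obtain ⟨K, hKB, hK, hBK⟩ := hcb B hBB
          obtain ⟨U, hU, hKU⟩ := (h𝒰 n).2 K hKB
          obtain ⟨g, hg, hg0, hg1⟩ := aux_sep hK ((h𝒰 n).1 U hU) hKU
          exact ⟨⟨g, hg⟩, ⟨U, hU, hg1⟩, fun x hx => by simpa [hg0 x (hBK hx)] using hε⟩)
      choose V hV hfV using hf
      refine ⟨V, hV, ?_, ?_⟩
      · rintro _ ⟨m, rfl⟩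
        exact (h𝒰 m).1 _ (hV m)
      · intro B hBB
        obtain ⟨_, ⟨n, rfl⟩, hn⟩ := (aux_closure 𝔅 hB _).1 hfΩ.2 B hBB 1 one_pos
        refine ⟨_, ⟨n, rfl⟩, fun x hx => ?_⟩
        by_contra hxV
        have := hn x hx
        rw [hfV n x hxV] at this
        simp at this
  · intro h A hA
    have key : ∀ m : ℕ, ∃ f : ℕ → CFn X, (∀ n, f n ∈ A (Nat.pair m n)) ∧
        ∀ B ∈ 𝔅, ∃ n, ∀ x ∈ B, |(f n).1 x| < 1 / ((m : ℝ) + 1) := by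
      intro m
      obtain ⟨V, hV, hVc⟩ := h (fun n => {U | ∃ f ∈ A (Nat.pair m n),
          {x | |f.1 x| < 1 / ((m : ℝ) + 1)} = U}) (by
        intro n
        refine ⟨?_, ?_⟩
        · rintro _ ⟨f, _, rfl⟩
          exact isOpen_lt f.2.abs continuous_const
        · intro B hBB
          obtain ⟨f, hfA, hf⟩ := (aux_closure 𝔅 hB _).1 (hA (Nat.pair m n)).2 B hBB
            (1 / ((m : ℝ) + 1)) (by positivity)
          exact ⟨_, ⟨f, hfA, rfl⟩, hf⟩)
      choose f hfA hf using hV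
      refine ⟨f, hfA, fun B hBB => ?_⟩
      obtain ⟨_, ⟨n, rfl⟩, hn⟩ := hVc.2 B hBB
      refine ⟨n, fun x hx => ?_⟩
      have := hn hx
      rw [← hf n] at this
      exact this
    choose f hfA hf using key
    have hmem : ∀ k, f (Nat.unpair k).1 (Nat.unpair k).2 ∈ A k := by
      intro k
      have := hfA (Nat.unpair k).1 (Nat.unpair k).2
      rwa [Nat.pair_unpair] at this
    refine ⟨fun k => f (Nat.unpair k).1 (Nat.unpair k).2, hmem, ?_, ?_⟩
    · rintro _ ⟨k, rfl⟩
      exact (hA k).1 (hmem k)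
    · rw [aux_closure]
      intro B hBB ε hε
      obtain ⟨m, hm⟩ := exists_nat_one_div_lt hε
      obtain ⟨n, hn⟩ := hf m B hBB
      refine ⟨f m n, ⟨Nat.pair m n, by simp⟩, fun x hx => (hn x hx).trans hm⟩
end
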